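/- arXiv:math/0503174 — 7 statements merged into one kernel-verified Lean document; each statement's English description precedes it below -/
import Mathlib

section
/- Let $n \ge 1$ and let $X$ be a symmetric positive semidefinite $2n \times 2n$ real matrix written in block form $X = \begin{pmatrix} U & Y \\ Y^\top & V \end{pmatrix}$ with $n \times n$ blocks, where $U$, $V$ and $Y$ have no negative entries. Let $D$ be the diagonal $2n \times 2n$ matrix whose $i$-th diagonal entry is the $i$-th row sum of $X$, and let $X_- = \begin{pmatrix} U & -Y \\ -Y^\top & V \end{pmatrix}$. Then $D - X_-$ is positive semidefinite. -/
open Matrix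

/-- If a symmetric matrix `W` dominates `M` entrywise in absolute value, then the quadratic form of
the diagonal matrix of row sums of `W` dominates that of `M`. -/
theorem dotProduct_diagonal_rowSum_sub_mulVec_nonneg {ι : Type*} [Fintype ι] [DecidableEq ι]
    {W M : Matrix ι ι ℝ} (hW : W.IsSymm) (hM : ∀ i j, |M i j| ≤ W i j) (x : ι → ℝ) :
    0 ≤ x ⬝ᵥ (diagonal (fun i => ∑ j, W i j) - M) *ᵥ x := by
  have expand : x ⬝ᵥ (diagonal (fun i => ∑ j, W i j) - M) *ᵥ x
      = ∑ i, ∑ j, W i j * x i ^ 2 - ∑ i, ∑ j, M i j * (x i * x j) := by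
    rw [sub_mulVec, dotProduct_sub]
    simp only [dotProduct, mulVec, Finset.mul_sum, Finset.sum_mul,
      diagonal_apply, ite_mul, zero_mul, Finset.sum_ite_eq, Finset.mem_univ, if_true]
    congr 1 <;> exact Finset.sum_congr rfl fun i _ => Finset.sum_congr rfl fun j _ => by ring
  have swap : ∑ i, ∑ j, W i j * x i ^ 2 = ∑ i, ∑ j, W i j * x j ^ 2 := by
    rw [Finset.sum_comm]
    simp only [hW.apply]
  have nonneg : 0 ≤ ∑ i, ∑ j, (W i j * x i ^ 2 + W i j * x j ^ 2 - 2 * (M i j * (x i * x j))) := by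
    refine Finset.sum_nonneg fun i _ => Finset.sum_nonneg fun j _ => ?_
    obtain ⟨hlower, hupper⟩ := abs_le.mp (hM i j)
    nlinarith [mul_nonneg (sub_nonneg.mpr hupper) (sq_nonneg (x i + x j)),
      mul_nonneg (neg_le_iff_add_nonneg.mp hlower) (sq_nonneg (x i - x j))]
  simp only [Finset.sum_sub_distrib, Finset.sum_add_distrib, ← Finset.mul_sum] at nonneg
  linarith

/-- Lemma 1(b): with `X = [[U, Y], [Yᵀ, V]]` symmetric PSD with nonnegative blocks,
`D` the diagonal matrix of row sums of `X`, and `X₋ = [[U, -Y], [-Yᵀ, V]]`,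
the matrix `D - X₋` is positive semidefinite. -/
theorem stmt_1 (n : ℕ) (hn : 1 ≤ n) (U Y V : Matrix (Fin n) (Fin n) ℝ)
    (hsym : (fromBlocks U Y Yᵀ V)ᵀ = fromBlocks U Y Yᵀ V)
    (hpsd : ∀ x : Fin n ⊕ Fin n → ℝ, 0 ≤ x ⬝ᵥ (fromBlocks U Y Yᵀ V) *ᵥ x)
    (hU : ∀ i j, 0 ≤ U i j) (hY : ∀ i j, 0 ≤ Y i j) (hV : ∀ i j, 0 ≤ V i j) :
    ∀ x : Fin n ⊕ Fin n → ℝ,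
      0 ≤ x ⬝ᵥ (Matrix.diagonal (fun i => ∑ j, fromBlocks U Y Yᵀ V i j)
                  - fromBlocks U (-Y) (-Yᵀ) V) *ᵥ x := by
  refine dotProduct_diagonal_rowSum_sub_mulVec_nonneg hsym ?_
  rintro (i | i) (j | j) <;> simp [abs_of_nonneg, hU, hY, hV]
end

section
/- Let $C$ be a symmetric $n \times n$ real matrix and $c \in \mathbb{R}^n$. Let $Q_{C,c}$ be the $2n \times 2n$ block matrix $\begin{pmatrix} C + ec^\top + ce^\top & -C + ce^\top - ec^\top \\ -C + ec^\top - ce^\top & C - ec^\top - ce^\top \end{pmatrix}$, where $e \in \mathbb{R}^n$ is the all-ones vector. Then $\min\{ y^\top C y + 2 c^\top y : y \in \mathbb{R}^n,\ \|y\|_1 \le 1 \} = \min\{ x^\top Q_{C,c}\, x : x \in \Delta^{2n} \}$; in particular both minima are attained and equal. -/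
open Matrix

/-- The block matrix `Q_{C,c}` of the simplex reformulation, as a quadratic form in `x = (u, v)`:
it equals `yᵀ C y + 2 (∑ x) cᵀ y` with `y = u - v`. -/
theorem dotProduct_fromBlocks_mulVec_eq {n : ℕ} (C : Matrix (Fin n) (Fin n) ℝ) (c : Fin n → ℝ)
    (x : Fin n ⊕ Fin n → ℝ) :
    x ⬝ᵥ (fromBlocks
        (C + vecMulVec (1 : Fin n → ℝ) c + vecMulVec c (1 : Fin n → ℝ))
        (-C + vecMulVec c (1 : Fin n → ℝ) - vecMulVec (1 : Fin n → ℝ) c)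
        (-C + vecMulVec (1 : Fin n → ℝ) c - vecMulVec c (1 : Fin n → ℝ))
        (C - vecMulVec (1 : Fin n → ℝ) c - vecMulVec c (1 : Fin n → ℝ))) *ᵥ x =
      (x ∘ Sum.inl - x ∘ Sum.inr) ⬝ᵥ C *ᵥ (x ∘ Sum.inl - x ∘ Sum.inr) +
        2 * ((∑ i, x i) * (c ⬝ᵥ (x ∘ Sum.inl - x ∘ Sum.inr))) := by
  obtain ⟨u, v, rfl⟩ : ∃ u v, x = Sum.elim u v :=
    ⟨x ∘ Sum.inl, x ∘ Sum.inr, (Sum.elim_comp_inl_inr x).symm⟩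
  have hu : ∑ i, u i = u ⬝ᵥ 1 := (dotProduct_one u).symm
  have hv : ∑ i, v i = v ⬝ᵥ 1 := (dotProduct_one v).symm
  rw [fromBlocks_mulVec, sumElim_dotProduct_sumElim]
  simp only [Sum.elim_comp_inl, Sum.elim_comp_inr, Fintype.sum_sum_type, Sum.elim_inl,
    Sum.elim_inr, hu, hv, add_mulVec, sub_mulVec, neg_mulVec, vecMulVec_mulVec, dotProduct_add,
    dotProduct_sub, dotProduct_neg, sub_dotProduct, mulVec_sub, op_smul_eq_smul, dotProduct_smul,
    smul_eq_mul, dotProduct_comm 1 u, dotProduct_comm 1 v, dotProduct_comm u c,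
    dotProduct_comm v c]
  ring

/-- Differences `u - v` with `(u, v)` in the standard simplex have `ℓ¹`-norm at most `1`. -/
theorem sum_abs_inl_sub_inr_le {n : ℕ} {x : Fin n ⊕ Fin n → ℝ} (hx : ∀ i, 0 ≤ x i) :
    ∑ i, |(x ∘ Sum.inl - x ∘ Sum.inr) i| ≤ ∑ i, x i := by
  rw [Fintype.sum_sum_type, ← Finset.sum_add_distrib]
  refine Finset.sum_le_sum fun i _ => ?_
  have h₁ := hx (Sum.inl i)
  have h₂ := hx (Sum.inr i)
  simp only [Pi.sub_apply, Function.comp_apply]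
  exact abs_le.2 ⟨by linarith, by linarith⟩

/-- Every point of the `ℓ¹`-ball is a difference `u - v` with `(u, v)` in the standard simplex:
take the positive and negative parts and spread the slack evenly. -/
theorem exists_mem_simplex_inl_sub_inr_eq {n : ℕ} (hn : 0 < n) {y : Fin n → ℝ}
    (hy : ∑ i, |y i| ≤ 1) :
    ∃ x : Fin n ⊕ Fin n → ℝ,
      (∀ i, 0 ≤ x i) ∧ ∑ i, x i = 1 ∧ x ∘ Sum.inl - x ∘ Sum.inr = y := by
  have hn' : (0 : ℝ) < n := Nat.cast_pos.2 hn
  set d : ℝ := (1 - ∑ i, |y i|) / (2 * n) with hd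
  have hd0 : 0 ≤ d := div_nonneg (by linarith) (by linarith)
  refine ⟨Sum.elim (fun i => (|y i| + y i) / 2 + d) (fun i => (|y i| - y i) / 2 + d), ?_, ?_, ?_⟩
  · rintro (i | i)
    · have := neg_abs_le (y i)
      simp only [Sum.elim_inl]
      linarith
    · have := le_abs_self (y i)
      simp only [Sum.elim_inr]
      linarith
  · rw [Fintype.sum_sum_type, ← Finset.sum_add_distrib]
    have h : ∀ i, (|y i| + y i) / 2 + d + ((|y i| - y i) / 2 + d) = |y i| + 2 * d :=
      fun i => by ring
    simp only [Sum.elim_inl, Sum.elim_inr, h, Finset.sum_add_distrib, Finset.sum_const,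
      Finset.card_univ, Fintype.card_fin, nsmul_eq_mul]
    rw [hd]
    field_simp
    ring
  · ext i
    simp only [Pi.sub_apply, Function.comp_apply, Sum.elim_inl, Sum.elim_inr]
    ring

/-- A quadratic form attains its minimum on the standard simplex. -/
theorem exists_isLeast_quadratic_simplex {ι : Type*} [Fintype ι] [Nonempty ι]
    (Q : Matrix ι ι ℝ) :
    ∃ α : ℝ, IsLeast {r : ℝ | ∃ x : ι → ℝ, (∀ i, 0 ≤ x i) ∧ (∑ i, x i) = 1 ∧
      r = x ⬝ᵥ Q *ᵥ x} α := by
  classical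
  have hne : (stdSimplex ℝ ι).Nonempty := ⟨_, single_mem_stdSimplex ℝ (Classical.arbitrary ι)⟩
  have hcont : Continuous fun x : ι → ℝ => x ⬝ᵥ Q *ᵥ x :=
    continuous_id.dotProduct (continuous_const.matrix_mulVec continuous_id)
  obtain ⟨x, hx, hmin⟩ := (isCompact_stdSimplex ℝ ι).exists_isMinOn hne hcont.continuousOn
  refine ⟨_, ⟨x, hx.1, hx.2, rfl⟩, ?_⟩
  rintro _ ⟨z, hz0, hz1, rfl⟩
  exact hmin ⟨hz0, hz1⟩

/-- Reformulation of the quadratic problem over the ℓ¹-ball as a standard quadratic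
optimization problem over the simplex Δ^{2n}:
`min { yᵀCy + 2cᵀy : ‖y‖₁ ≤ 1 } = min { xᵀ Q_{C,c} x : x ∈ Δ^{2n} }`,
with both minima attained. -/
theorem stmt_4 (n : ℕ) (hn : 0 < n) (C : Matrix (Fin n) (Fin n) ℝ) (hC : Cᵀ = C)
    (c : Fin n → ℝ) :
    ∃ α : ℝ,
      IsLeast {r : ℝ | ∃ y : Fin n → ℝ, (∑ i, |y i|) ≤ 1 ∧
          r = y ⬝ᵥ C *ᵥ y + 2 * (c ⬝ᵥ y)} α ∧
      IsLeast {r : ℝ | ∃ x : Fin n ⊕ Fin n → ℝ, (∀ i, 0 ≤ x i) ∧ (∑ i, x i) = 1 ∧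
          r = x ⬝ᵥ (fromBlocks
              (C + vecMulVec (1 : Fin n → ℝ) c + vecMulVec c (1 : Fin n → ℝ))
              (-C + vecMulVec c (1 : Fin n → ℝ) - vecMulVec (1 : Fin n → ℝ) c)
              (-C + vecMulVec (1 : Fin n → ℝ) c - vecMulVec c (1 : Fin n → ℝ))
              (C - vecMulVec (1 : Fin n → ℝ) c - vecMulVec c (1 : Fin n → ℝ))) *ᵥ x} α := by
  have : Nonempty (Fin n) := ⟨⟨0, hn⟩⟩
  obtain ⟨α, hα⟩ := exists_isLeast_quadratic_simplex (fromBlocks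
    (C + vecMulVec (1 : Fin n → ℝ) c + vecMulVec c (1 : Fin n → ℝ))
    (-C + vecMulVec c (1 : Fin n → ℝ) - vecMulVec (1 : Fin n → ℝ) c)
    (-C + vecMulVec (1 : Fin n → ℝ) c - vecMulVec c (1 : Fin n → ℝ))
    (C - vecMulVec (1 : Fin n → ℝ) c - vecMulVec c (1 : Fin n → ℝ)))
  refine ⟨α, ?_, hα⟩
  convert hα using 1
  ext r
  constructor
  · rintro ⟨y, hy, rfl⟩
    obtain ⟨x, hx0, hx1, rfl⟩ := exists_mem_simplex_inl_sub_inr_eq hn hy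
    exact ⟨x, hx0, hx1, by rw [dotProduct_fromBlocks_mulVec_eq, hx1, one_mul]⟩
  · rintro ⟨x, hx0, hx1, rfl⟩
    exact ⟨x ∘ Sum.inl - x ∘ Sum.inr, (sum_abs_inl_sub_inr_le hx0).trans_eq hx1,
      by rw [dotProduct_fromBlocks_mulVec_eq, hx1, one_mul]⟩
end

section
/- For the symmetric $3 \times 3$ matrix $C = \begin{pmatrix} -1 & 1 & -1 \\ 1 & -1 & -1 \\ -1 & -1 & -1 \end{pmatrix}$, the strict inequality $\alpha_C^{\mathrm{Nest}} < \alpha_{Q_C}^{\mathrm{cop}}$ holds; in fact $\alpha_C^{\mathrm{Nest}} = -4/3$ and $\alpha_{Q_C}^{\mathrm{cop}} = -1 = \min\{ y^\top C y : \|y\|_1 \le 1 \}$. -/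
open Matrix

/-- The matrix `v vᵀ - 2 I` with `v = (1, 1, -1)`. -/
def signMatrix : Matrix (Fin 3) (Fin 3) ℝ := !![-1, 1, -1; 1, -1, -1; -1, -1, -1]

theorem neg_one_le_signMatrix (i j : Fin 3) : -1 ≤ signMatrix i j := by
  fin_cases i <;> fin_cases j <;> norm_num [signMatrix]

theorem signMatrix_le_one (i j : Fin 3) : signMatrix i j ≤ 1 := by
  fin_cases i <;> fin_cases j <;> norm_num [signMatrix]

theorem isLeast_nesterov :
    IsLeast {r : ℝ | ∃ W : Matrix (Fin 3) (Fin 3) ℝ, Wᵀ = W ∧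
        (∀ x : Fin 3 → ℝ, 0 ≤ x ⬝ᵥ W *ᵥ x) ∧
        (∃ u : Fin 3 → ℝ, (∀ i, 0 ≤ u i) ∧ (∑ i, u i) = 1 ∧
          ∀ x : Fin 3 → ℝ, 0 ≤ x ⬝ᵥ (Matrix.diagonal u - W) *ᵥ x) ∧
        r = ∑ i, ∑ j, signMatrix i j * W i j} (-4 / 3) := by
  constructor
  · refine ⟨!![2/9, -1/9, 1/9; -1/9, 2/9, 1/9; 1/9, 1/9, 2/9], ?_, ?_,
      ⟨fun _ => 1 / 3, ?_, ?_, ?_⟩, ?_⟩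
    · ext i j
      fin_cases i <;> fin_cases j <;> rfl
    · intro x
      simp [dotProduct, Matrix.mulVec, Fin.sum_univ_three]
      nlinarith [sq_nonneg (x 0 - x 1), sq_nonneg (x 0 + x 2), sq_nonneg (x 1 + x 2)]
    · intro _
      norm_num
    · norm_num [Fin.sum_univ_three]
    · intro x
      simp [dotProduct, Matrix.mulVec, Fin.sum_univ_three, Matrix.diagonal_apply]
      nlinarith [sq_nonneg (x 0 + x 1 - x 2)]
    · simp [signMatrix, Fin.sum_univ_three]
      norm_num
  · rintro r ⟨W, -, hW, ⟨u, -, hu, hD⟩, rfl⟩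
    -- The dual certificate is `2 I - (2 / 3) v vᵀ`, written as a sum of three squares.
    have h₀ := hW ![1, 1, -1]
    have h₁ := hD ![1, -1, 0]
    have h₂ := hD ![1, 0, 1]
    have h₃ := hD ![0, 1, 1]
    simp [dotProduct, Matrix.mulVec, Fin.sum_univ_three, Matrix.diagonal_apply]
      at h₀ h₁ h₂ h₃ hu
    simp [signMatrix, Fin.sum_univ_three]
    linarith

theorem isLeast_copositive :
    IsLeast {r : ℝ | ∃ X : Matrix (Fin 3 ⊕ Fin 3) (Fin 3 ⊕ Fin 3) ℝ, Xᵀ = X ∧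
        (∀ x : Fin 3 ⊕ Fin 3 → ℝ, 0 ≤ x ⬝ᵥ X *ᵥ x) ∧
        (∀ i j, 0 ≤ X i j) ∧ (∑ i, ∑ j, X i j) = 1 ∧
        r = ∑ i, ∑ j, fromBlocks signMatrix (-signMatrix) (-signMatrix) signMatrix i j * X i j}
      (-1) := by
  constructor
  · refine ⟨Matrix.single (Sum.inl 0) (Sum.inl 0) 1, ?_, ?_, ?_, ?_, ?_⟩
    · simp
    · intro x
      simp [dotProduct, Matrix.mulVec, Fin.sum_univ_three, Matrix.single_apply, mul_self_nonneg]
    · intro i j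
      rw [Matrix.single_apply]
      split_ifs <;> norm_num
    · simp only [Matrix.single_apply, Fintype.sum_sum_type, Fin.sum_univ_three]
      simp
    · simp [Fin.sum_univ_three, Matrix.single_apply, signMatrix]
  · rintro r ⟨X, -, -, hX, hsum, rfl⟩
    have hQ (i j : Fin 3 ⊕ Fin 3) :
        -1 ≤ fromBlocks signMatrix (-signMatrix) (-signMatrix) signMatrix i j := by
      rcases i with i | i <;> rcases j with j | j <;>
        simp [neg_one_le_signMatrix, signMatrix_le_one]
    calc (-1 : ℝ) = ∑ i, ∑ j, -1 * X i j := by simp only [← Finset.mul_sum, hsum, mul_one]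
      _ ≤ _ := Finset.sum_le_sum fun i _ => Finset.sum_le_sum fun j _ =>
        mul_le_mul_of_nonneg_right (hQ i j) (hX i j)

theorem isLeast_l1_ball :
    IsLeast {r : ℝ | ∃ y : Fin 3 → ℝ, (∑ i, |y i|) ≤ 1 ∧ r = y ⬝ᵥ signMatrix *ᵥ y} (-1) := by
  constructor
  · refine ⟨![1, 0, 0], ?_, ?_⟩
    · simp [Fin.sum_univ_three]
    · simp [dotProduct, Matrix.mulVec, Fin.sum_univ_three, signMatrix]
  · rintro r ⟨y, hy, rfl⟩
    have hterm (i j : Fin 3) : -(|y i| * |y j|) ≤ y i * (signMatrix i j * y j) := by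
      have h : |y i * (signMatrix i j * y j)| ≤ |y i| * |y j| := by
        rw [abs_mul, abs_mul]
        have hC := abs_le.mpr ⟨neg_one_le_signMatrix i j, signMatrix_le_one i j⟩
        exact mul_le_mul_of_nonneg_left (mul_le_of_le_one_left (abs_nonneg _) hC) (abs_nonneg _)
      exact (abs_le.mp h).1
    have hnonneg : 0 ≤ ∑ i, |y i| := Finset.sum_nonneg fun i _ => abs_nonneg _
    calc (-1 : ℝ) ≤ -((∑ i, |y i|) * ∑ j, |y j|) := by nlinarith
      _ = ∑ i, ∑ j, -(|y i| * |y j|) := by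
        rw [Finset.sum_mul_sum]
        simp only [Finset.sum_neg_distrib]
      _ ≤ ∑ i, ∑ j, y i * (signMatrix i j * y j) :=
        Finset.sum_le_sum fun i _ => Finset.sum_le_sum fun j _ => hterm i j
      _ = _ := by simp only [dotProduct, Matrix.mulVec, Finset.mul_sum]

/-- Theorem 1 (strictness instance): for
`C = [[-1, 1, -1], [1, -1, -1], [-1, -1, -1]]` one has `α_C^Nest = -4/3`,
`α_{Q_C}^cop = -1 = min { yᵀCy : ‖y‖₁ ≤ 1 }`, so `α_C^Nest < α_{Q_C}^cop`. -/
theorem stmt_8 :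
    let C : Matrix (Fin 3) (Fin 3) ℝ := !![-1, 1, -1; 1, -1, -1; -1, -1, -1]
    let nest : ℝ := sInf {r : ℝ | ∃ W : Matrix (Fin 3) (Fin 3) ℝ, Wᵀ = W ∧
        (∀ x : Fin 3 → ℝ, 0 ≤ x ⬝ᵥ W *ᵥ x) ∧
        (∃ u : Fin 3 → ℝ, (∀ i, 0 ≤ u i) ∧ (∑ i, u i) = 1 ∧
          ∀ x : Fin 3 → ℝ, 0 ≤ x ⬝ᵥ (Matrix.diagonal u - W) *ᵥ x) ∧
        r = ∑ i, ∑ j, C i j * W i j}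
    let cop : ℝ := sInf {r : ℝ | ∃ X : Matrix (Fin 3 ⊕ Fin 3) (Fin 3 ⊕ Fin 3) ℝ, Xᵀ = X ∧
        (∀ x : Fin 3 ⊕ Fin 3 → ℝ, 0 ≤ x ⬝ᵥ X *ᵥ x) ∧
        (∀ i j, 0 ≤ X i j) ∧ (∑ i, ∑ j, X i j) = 1 ∧
        r = ∑ i, ∑ j, fromBlocks C (-C) (-C) C i j * X i j}
    nest = -4/3 ∧ cop = -1 ∧
      IsLeast {r : ℝ | ∃ y : Fin 3 → ℝ, (∑ i, |y i|) ≤ 1 ∧ r = y ⬝ᵥ C *ᵥ y} (-1) ∧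
      nest < cop := by
  intro C nest cop
  have hnest : nest = -4 / 3 := isLeast_nesterov.csInf_eq
  have hcop : cop = -1 := isLeast_copositive.csInf_eq
  refine ⟨hnest, hcop, isLeast_l1_ball, ?_⟩
  rw [hnest, hcop]
  norm_num
end

section
/- For the symmetric $3 \times 3$ matrix $C = \begin{pmatrix} -1 & 2 & -1 \\ 2 & -1 & -1 \\ -1 & -1 & -1 \end{pmatrix}$, one has $\min\{ y^\top C y : y \in \mathbb{R}^3,\ \|y\|_1 \le 1 \} = -3/2 < -1 = \alpha_C^{\mathrm{cop}}$; in particular, the bound $\alpha_C^{\mathrm{cop}}$ can strictly exceed the true minimum of the quadratic form over the $\ell^1$-ball. -/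
open Matrix

theorem neg_three_halves_mul_sq_le (a b c : ℝ) :
    -(3 / 2) * (|a| + |b| + |c|) ^ 2 ≤ 6 * (a * b) - (a + b + c) ^ 2 := by
  rcases abs_cases a with ⟨ha, ha'⟩ | ⟨ha, ha'⟩ <;>
  rcases abs_cases b with ⟨hb, hb'⟩ | ⟨hb, hb'⟩ <;>
  rcases abs_cases c with ⟨hc, hc'⟩ | ⟨hc, hc'⟩ <;>
  · have hab := mul_nonneg (abs_nonneg a) (abs_nonneg b)
    have hac := mul_nonneg (abs_nonneg a) (abs_nonneg c)
    have hbc := mul_nonneg (abs_nonneg b) (abs_nonneg c)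
    rw [ha, hb] at hab
    rw [ha, hc] at hac
    rw [hb, hc] at hbc
    rw [ha, hb, hc]
    nlinarith [sq_nonneg (a - b), sq_nonneg (a + b), sq_nonneg a, sq_nonneg b, sq_nonneg c]

/-- Theorem 2 (second part): for `C = [[-1, 2, -1], [2, -1, -1], [-1, -1, -1]]`,
`min { yᵀCy : ‖y‖₁ ≤ 1 } = -3/2 < -1 = α_C^cop`, so the bound `α_C^cop` can strictly
exceed the true minimum over the ℓ¹-ball. -/
theorem stmt_10 :
    let C : Matrix (Fin 3) (Fin 3) ℝ := !![-1, 2, -1; 2, -1, -1; -1, -1, -1]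
    IsLeast {r : ℝ | ∃ y : Fin 3 → ℝ, (∑ i, |y i|) ≤ 1 ∧ r = y ⬝ᵥ C *ᵥ y} (-3/2) ∧
    sInf {r : ℝ | ∃ U : Matrix (Fin 3) (Fin 3) ℝ, Uᵀ = U ∧
        (∀ x : Fin 3 → ℝ, 0 ≤ x ⬝ᵥ U *ᵥ x) ∧
        (∀ i j, 0 ≤ U i j) ∧ (∑ i, ∑ j, U i j) = 1 ∧
        r = ∑ i, ∑ j, C i j * U i j} = -1 ∧
    (-3/2 : ℝ) < -1 := by
  intro C
  have hform (y : Fin 3 → ℝ) :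
      y ⬝ᵥ C *ᵥ y = 6 * (y 0 * y 1) - (y 0 + y 1 + y 2) ^ 2 := by
    simp [C, Matrix.mulVec, dotProduct, Fin.sum_univ_three]
    ring
  refine ⟨⟨⟨![1 / 2, -1 / 2, 0], ?_, ?_⟩, ?_⟩, IsLeast.csInf_eq ⟨?_, ?_⟩, by norm_num⟩
  · simp only [Fin.sum_univ_three, Matrix.cons_val]
    norm_num [abs_of_pos, abs_of_neg]
  · rw [hform]
    simp only [Matrix.cons_val]
    norm_num
  · rintro r ⟨y, hy, rfl⟩
    rw [Fin.sum_univ_three] at hy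
    rw [hform]
    have hsq : (|y 0| + |y 1| + |y 2|) ^ 2 ≤ 1 := pow_le_one₀ (by positivity) hy
    linarith [neg_three_halves_mul_sq_le (y 0) (y 1) (y 2)]
  · refine ⟨!![0, 0, 0; 0, 0, 0; 0, 0, 1], ?_, fun x => ?_, fun i j => ?_, ?_, ?_⟩
    · ext i j
      fin_cases i <;> fin_cases j <;> rfl
    · simpa [Matrix.mulVec, dotProduct, Fin.sum_univ_three] using mul_self_nonneg (x 2)
    · fin_cases i <;> fin_cases j <;> simp
    · simp [Fin.sum_univ_three]
    · simp [C, Fin.sum_univ_three]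
  · rintro r ⟨U, -, -, hU, hsum, rfl⟩
    have h01 := hU 0 1
    have h10 := hU 1 0
    simp only [Fin.sum_univ_three] at hsum
    simp [C, Fin.sum_univ_three]
    linarith
end

section
/- Let $C$ be a symmetric $n \times n$ real matrix with no positive entries (i.e., $C_{ij} \le 0$ for all $i, j$). Then $\min\{ y^\top C y : y \in \mathbb{R}^n,\ \|y\|_1 \le 1 \} = \min\{ x^\top C x : x \in \Delta^n \}$. -/
open Matrix

/-- A quadratic form with nonpositive coefficients decreases when the vector is replaced by one
that dominates it entrywise in absolute value. -/
theorem dotProduct_mulVec_le_of_abs_le {ι : Type*} [Fintype ι] {C : Matrix ι ι ℝ}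
    (hC : ∀ i j, C i j ≤ 0) {x y : ι → ℝ} (h : ∀ i, |y i| ≤ x i) :
    x ⬝ᵥ C *ᵥ x ≤ y ⬝ᵥ C *ᵥ y := by
  simp only [dotProduct, mulVec, Finset.mul_sum]
  refine Finset.sum_le_sum fun i _ => Finset.sum_le_sum fun j _ => ?_
  have hxy : y i * y j ≤ x i * x j :=
    calc y i * y j ≤ |y i| * |y j| := (le_abs_self _).trans_eq (abs_mul _ _)
      _ ≤ x i * x j := mul_le_mul (h i) (h j) (abs_nonneg _) ((abs_nonneg _).trans (h i))
  calc x i * (C i j * x j) = C i j * (x i * x j) := by ring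
    _ ≤ C i j * (y i * y j) := mul_le_mul_of_nonpos_left hxy (hC i j)
    _ = y i * (C i j * y j) := by ring

/-- Every point of the `ℓ¹` unit ball is dominated in absolute value by a point of the simplex. -/
theorem exists_mem_stdSimplex_abs_le {ι : Type*} [Fintype ι] [Nonempty ι] {y : ι → ℝ}
    (hy : ∑ i, |y i| ≤ 1) : ∃ x ∈ stdSimplex ℝ ι, ∀ i, |y i| ≤ x i := by
  classical
  obtain ⟨k⟩ := ‹Nonempty ι›
  have hle : ∀ i, |y i| ≤ |y i| + Pi.single (M := fun _ => ℝ) k (1 - ∑ j, |y j|) i := fun i =>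
    le_add_of_nonneg_right ((Pi.single_nonneg.2 (sub_nonneg.2 hy) :
      (0 : ι → ℝ) ≤ Pi.single k (1 - ∑ j, |y j|)) i)
  refine ⟨fun i => |y i| + Pi.single (M := fun _ => ℝ) k (1 - ∑ j, |y j|) i,
    ⟨fun i => (abs_nonneg _).trans (hle i), ?_⟩, hle⟩
  simp [Finset.sum_add_distrib]

/-- Proposition 1: for a symmetric matrix `C` with no positive entries, the minimum of
the quadratic form over the ℓ¹-ball equals its minimum over the standard simplex. -/
theorem stmt_11 (n : ℕ) (hn : 0 < n) (C : Matrix (Fin n) (Fin n) ℝ) (hC : Cᵀ = C)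
    (hneg : ∀ i j, C i j ≤ 0) :
    ∃ α : ℝ,
      IsLeast {r : ℝ | ∃ y : Fin n → ℝ, (∑ i, |y i|) ≤ 1 ∧ r = y ⬝ᵥ C *ᵥ y} α ∧
      IsLeast {r : ℝ | ∃ x : Fin n → ℝ, (∀ i, 0 ≤ x i) ∧ (∑ i, x i) = 1 ∧
          r = x ⬝ᵥ C *ᵥ x} α := by
  have : Nonempty (Fin n) := ⟨⟨0, hn⟩⟩
  have hcont : Continuous fun x : Fin n → ℝ => x ⬝ᵥ C *ᵥ x := by
    simp only [dotProduct, mulVec]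
    fun_prop
  obtain ⟨x, ⟨hx0, hx1⟩, hmin⟩ := (isCompact_stdSimplex ℝ (Fin n)).exists_isMinOn
    ⟨_, single_mem_stdSimplex ℝ ⟨0, hn⟩⟩ hcont.continuousOn
  refine ⟨x ⬝ᵥ C *ᵥ x, ⟨⟨x, ?_, rfl⟩, ?_⟩, ⟨x, hx0, hx1, rfl⟩, ?_⟩
  · simp only [abs_of_nonneg (hx0 _), hx1, le_refl]
  · rintro _ ⟨y, hy, rfl⟩
    obtain ⟨z, hz, hyz⟩ := exists_mem_stdSimplex_abs_le hy
    exact (hmin hz).trans (dotProduct_mulVec_le_of_abs_le hneg hyz)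
  · rintro _ ⟨z, hz0, hz1, rfl⟩
    exact hmin ⟨hz0, hz1⟩
end

section
/- Let $C$ be a symmetric $n \times n$ real matrix with no positive entries (i.e., $C_{ij} \le 0$ for all $i, j$). Then $\alpha_{Q_C}^{\mathrm{cop}} = \alpha_C^{\mathrm{cop}}$, where $\alpha_{Q_C}^{\mathrm{cop}} = \inf\{ Q_C \bullet X : X \text{ symmetric } 2n \times 2n \text{ positive semidefinite},\ X_{ij} \ge 0 \text{ for all } i,j,\ \sum_{i,j} X_{ij} = 1 \}$ with $Q_C = \begin{pmatrix} C & -C \\ -C & C \end{pmatrix}$, and $\alpha_C^{\mathrm{cop}} = \inf\{ C \bullet U : U \text{ symmetric } n \times n \text{ positive semidefinite},\ U_{ij} \ge 0 \text{ for all } i,j,\ \sum_{i,j} U_{ij} = 1 \}$. -/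
open Matrix

/-- The quadratic form of a `2 × 2` block matrix at the vector `(x, y)`, in terms of the blocks. -/
lemma dotProduct_mulVec_elim {m : Type*} [Fintype m] (X : Matrix (m ⊕ m) (m ⊕ m) ℝ)
    (x y : m → ℝ) :
    Sum.elim x y ⬝ᵥ X *ᵥ Sum.elim x y =
      x ⬝ᵥ X.toBlocks₁₁ *ᵥ x + x ⬝ᵥ X.toBlocks₁₂ *ᵥ y +
        (y ⬝ᵥ X.toBlocks₂₁ *ᵥ x + y ⬝ᵥ X.toBlocks₂₂ *ᵥ y) := by
  conv_lhs => rw [← fromBlocks_toBlocks X]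
  rw [fromBlocks_mulVec, sumElim_dotProduct_sumElim]
  simp [dotProduct_add]

/-- Theorem 3 (first part): for a symmetric `C` with no positive entries,
`α_{Q_C}^cop = α_C^cop`. -/
theorem stmt_14 (n : ℕ) (C : Matrix (Fin n) (Fin n) ℝ) (hC : Cᵀ = C)
    (hneg : ∀ i j, C i j ≤ 0) :
    sInf {r : ℝ | ∃ X : Matrix (Fin n ⊕ Fin n) (Fin n ⊕ Fin n) ℝ, Xᵀ = X ∧
        (∀ x : Fin n ⊕ Fin n → ℝ, 0 ≤ x ⬝ᵥ X *ᵥ x) ∧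
        (∀ i j, 0 ≤ X i j) ∧ (∑ i, ∑ j, X i j) = 1 ∧
        r = ∑ i, ∑ j, fromBlocks C (-C) (-C) C i j * X i j} =
    sInf {r : ℝ | ∃ U : Matrix (Fin n) (Fin n) ℝ, Uᵀ = U ∧
        (∀ x : Fin n → ℝ, 0 ≤ x ⬝ᵥ U *ᵥ x) ∧
        (∀ i j, 0 ≤ U i j) ∧ (∑ i, ∑ j, U i j) = 1 ∧
        r = ∑ i, ∑ j, C i j * U i j} := by
  apply csInf_eq_csInf_of_forall_exists_le
  · rintro _ ⟨X, hsym, hpsd, hnn, hsum, rfl⟩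
    set A := X.toBlocks₁₁ + X.toBlocks₂₂ with hA
    set s := ∑ i, ∑ j, A i j with hs
    set b := ∑ i, ∑ j, (X.toBlocks₁₂ + X.toBlocks₂₁) i j with hb
    have hAnn : ∀ i j, 0 ≤ A i j := fun i j => add_nonneg (hnn _ _) (hnn _ _)
    have hb0 : 0 ≤ b := Finset.sum_nonneg fun i _ => Finset.sum_nonneg fun j _ =>
      add_nonneg (hnn _ _) (hnn _ _)
    have htotal : s + b = 1 := by
      rw [← hsum]
      simp only [hs, hb, hA, Fintype.sum_sum_type, Matrix.add_apply, Finset.sum_add_distrib,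
        toBlocks₁₁, toBlocks₁₂, toBlocks₂₁, toBlocks₂₂, of_apply]
      ring
    have hdiff : 0 ≤ s - b := by
      have h := hpsd (Sum.elim 1 (-1))
      rw [dotProduct_mulVec_elim] at h
      simp only [mulVec_neg, neg_dotProduct, dotProduct_neg] at h
      simp only [dotProduct, mulVec, Pi.one_apply, one_mul, mul_one] at h
      simp only [hs, hb, hA, Matrix.add_apply, Finset.sum_add_distrib]
      linarith
    have hspos : 0 < s := by linarith
    have hs1 : s ≤ 1 := by linarith
    have hCA : ∑ i, ∑ j, C i j * A i j ≤ 0 := Finset.sum_nonpos fun i _ =>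
      Finset.sum_nonpos fun j _ => mul_nonpos_of_nonpos_of_nonneg (hneg i j) (hAnn i j)
    have hscale : ∑ i, ∑ j, C i j * (s⁻¹ • A) i j = s⁻¹ * ∑ i, ∑ j, C i j * A i j := by
      simp only [Finset.mul_sum, Matrix.smul_apply, smul_eq_mul, mul_left_comm]
    refine ⟨_, ⟨s⁻¹ • A, ?_, fun x => ?_, fun i j => ?_, ?_, rfl⟩, ?_⟩
    · ext i j
      have h : ∀ k l, X k l = X l k := fun k l => congrFun (congrFun hsym l) k
      simp [hA, mul_add, toBlocks₁₁, toBlocks₂₂, h (Sum.inl j), h (Sum.inr j)]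
    · have h₁ := hpsd (Sum.elim x 0)
      have h₂ := hpsd (Sum.elim 0 x)
      rw [dotProduct_mulVec_elim] at h₁ h₂
      simp only [mulVec_zero, dotProduct_zero, zero_dotProduct, add_zero, zero_add] at h₁ h₂
      rw [smul_mulVec, dotProduct_smul, hA, add_mulVec, dotProduct_add]
      exact mul_nonneg (by positivity) (add_nonneg h₁ h₂)
    · exact mul_nonneg (by positivity) (hAnn i j)
    · simp only [Matrix.smul_apply, smul_eq_mul, ← Finset.mul_sum]
      exact inv_mul_cancel₀ hspos.ne'
    · have hoff : ∑ i, ∑ j, C i j * (X.toBlocks₁₂ + X.toBlocks₂₁) i j ≤ 0 :=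
        Finset.sum_nonpos fun i _ => Finset.sum_nonpos fun j _ =>
          mul_nonpos_of_nonpos_of_nonneg (hneg i j) (add_nonneg (hnn _ _) (hnn _ _))
      have hsplit : ∑ i, ∑ j, fromBlocks C (-C) (-C) C i j * X i j =
          ∑ i, ∑ j, C i j * A i j -
            ∑ i, ∑ j, C i j * (X.toBlocks₁₂ + X.toBlocks₂₁) i j := by
        simp only [hA, Fintype.sum_sum_type, Matrix.add_apply, Finset.sum_add_distrib, mul_add,
          toBlocks₁₁, toBlocks₁₂, toBlocks₂₁, toBlocks₂₂, of_apply, fromBlocks_apply₁₁,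
          fromBlocks_apply₁₂, fromBlocks_apply₂₁, fromBlocks_apply₂₂, Matrix.neg_apply, neg_mul,
          Finset.sum_neg_distrib]
        ring
      rw [hscale, hsplit]
      have := mul_le_mul_of_nonpos_right ((one_le_inv₀ hspos).2 hs1) hCA
      linarith
  · rintro _ ⟨U, hsym, hpsd, hnn, hsum, rfl⟩
    refine ⟨_, ⟨fromBlocks U 0 0 0, ?_, fun x => ?_, ?_, ?_, rfl⟩, ?_⟩
    · simp [fromBlocks_transpose, hsym]
    · rw [← Sum.elim_comp_inl_inr x, dotProduct_mulVec_elim]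
      simpa using hpsd (x ∘ Sum.inl)
    · rintro (i | i) (j | j) <;> simp [hnn]
    · simpa using hsum
    · simp
end

section
/- Let $C$ be a symmetric $n \times n$ real matrix and let $1 \le p \le 2$. Then $n^{2(p-1)/p} \, \alpha_{Q_C}^{\mathrm{cop}} \le \min\{ y^\top C y : y \in \mathbb{R}^n,\ \|y\|_p \le 1 \}$, where $\alpha_{Q_C}^{\mathrm{cop}} = \inf\{ Q_C \bullet X : X \text{ symmetric } 2n \times 2n \text{ positive semidefinite},\ X_{ij} \ge 0 \text{ for all } i,j,\ \sum_{i,j} X_{ij} = 1 \}$ with $Q_C = \begin{pmatrix} C & -C \\ -C & C \end{pmatrix}$. -/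
open Matrix

/-- The feasible values of the doubly nonnegative relaxation of `Q_C` over the simplex. -/
def dnnValues {n : ℕ} (C : Matrix (Fin n) (Fin n) ℝ) : Set ℝ :=
  {r : ℝ | ∃ X : Matrix (Fin n ⊕ Fin n) (Fin n ⊕ Fin n) ℝ, Xᵀ = X ∧
    (∀ x : Fin n ⊕ Fin n → ℝ, 0 ≤ x ⬝ᵥ X *ᵥ x) ∧
    (∀ i j, 0 ≤ X i j) ∧ (∑ i, ∑ j, X i j) = 1 ∧
    r = ∑ i, ∑ j, fromBlocks C (-C) (-C) C i j * X i j}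

lemma bddBelow_dnnValues {n : ℕ} (C : Matrix (Fin n) (Fin n) ℝ) : BddBelow (dnnValues C) := by
  refine ⟨-∑ i, ∑ j, |fromBlocks C (-C) (-C) C i j|, ?_⟩
  rintro r ⟨X, -, -, hX, hsum, rfl⟩
  simp only [← Finset.sum_neg_distrib]
  refine Finset.sum_le_sum fun i _ => Finset.sum_le_sum fun j _ => ?_
  have hle : X i j ≤ 1 := by
    rw [← hsum]
    exact (Finset.single_le_sum (f := fun j => X i j) (fun j _ => hX i j)
      (Finset.mem_univ j)).trans
      (Finset.single_le_sum (f := fun i => ∑ j, X i j)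
        (fun i _ => Finset.sum_nonneg fun j _ => hX i j) (Finset.mem_univ i))
  have habs : |fromBlocks C (-C) (-C) C i j * X i j| ≤ |fromBlocks C (-C) (-C) C i j| := by
    rw [abs_mul, abs_of_nonneg (hX i j)]
    exact mul_le_of_le_one_right (abs_nonneg _) hle
  exact (neg_le_neg habs).trans (neg_abs_le _)

lemma sum_fromBlocks_mul_vecMulVec {n : ℕ} (C : Matrix (Fin n) (Fin n) ℝ) (a b : Fin n → ℝ) :
    ∑ i, ∑ j, fromBlocks C (-C) (-C) C i j * (Sum.elim a b i * Sum.elim a b j) =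
      (a - b) ⬝ᵥ C *ᵥ (a - b) := by
  simp only [Fintype.sum_sum_type, dotProduct, mulVec, Sum.elim_inl, Sum.elim_inr,
    fromBlocks_apply₁₁, fromBlocks_apply₁₂, fromBlocks_apply₂₁, fromBlocks_apply₂₂,
    Pi.sub_apply, Matrix.neg_apply, Finset.mul_sum, ← Finset.sum_add_distrib]
  exact Finset.sum_congr rfl fun i _ => Finset.sum_congr rfl fun j _ => by ring

/-- Rank-one matrices built from points of the simplex are feasible. -/
lemma sInf_dnnValues_le {n : ℕ} (C : Matrix (Fin n) (Fin n) ℝ) {a b : Fin n → ℝ}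
    (ha : ∀ i, 0 ≤ a i) (hb : ∀ i, 0 ≤ b i) (hab : ∑ i, (a i + b i) = 1) :
    sInf (dnnValues C) ≤ (a - b) ⬝ᵥ C *ᵥ (a - b) := by
  refine csInf_le (bddBelow_dnnValues C)
    ⟨vecMulVec (Sum.elim a b) (Sum.elim a b), transpose_vecMulVec _ _, ?_, ?_, ?_, ?_⟩
  · intro x
    simpa using (posSemidef_vecMulVec_self_star (Sum.elim a b)).dotProduct_mulVec_nonneg x
  · have hz : ∀ i, 0 ≤ Sum.elim a b i := Sum.rec ha hb
    exact fun i j => mul_nonneg (hz i) (hz j)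
  · simp only [vecMulVec_apply, ← Finset.mul_sum, ← Finset.sum_mul]
    rw [Fintype.sum_sum_type]
    simp [← Finset.sum_add_distrib, hab]
  · exact (sum_fromBlocks_mul_vecMulVec C a b).symm

lemma sInf_dnnValues_nonpos {n : ℕ} (C : Matrix (Fin n) (Fin n) ℝ) (hn : 0 < n) :
    sInf (dnnValues C) ≤ 0 := by
  have hn' : (n : ℝ) ≠ 0 := by positivity
  have h := sInf_dnnValues_le C (a := fun _ => 1 / (2 * n)) (b := fun _ => 1 / (2 * n))
    (fun _ => by positivity) (fun _ => by positivity)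
    (by simp only [Finset.sum_const, Finset.card_univ, Fintype.card_fin, nsmul_eq_mul]
        field_simp
        norm_num)
  simpa using h

/-- The relaxation bounds the quadratic form on the `ℓ¹`-ball of any radius. -/
lemma sInf_dnnValues_mul_sq_le {n : ℕ} (C : Matrix (Fin n) (Fin n) ℝ) (y : Fin n → ℝ) :
    sInf (dnnValues C) * (∑ i, |y i|) ^ 2 ≤ y ⬝ᵥ C *ᵥ y := by
  rcases (Finset.sum_nonneg fun i _ => abs_nonneg (y i) : 0 ≤ ∑ i, |y i|).eq_or_lt with hs | hs
  · have hy : y = 0 := by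
      ext i
      simpa using (Finset.sum_eq_zero_iff_of_nonneg fun i _ => abs_nonneg (y i)).1 hs.symm i
        (Finset.mem_univ i)
    simp [hy]
  · set s := ∑ i, |y i|
    have h := sInf_dnnValues_le C (a := fun i => (y i)⁺ / s) (b := fun i => (y i)⁻ / s)
      (fun i => div_nonneg (posPart_nonneg _) hs.le) (fun i => div_nonneg (negPart_nonneg _) hs.le)
      (by simp only [← add_div, posPart_add_negPart, ← Finset.sum_div]
          exact div_self hs.ne')
    have hsub : (fun i => (y i)⁺ / s) - (fun i => (y i)⁻ / s) = s⁻¹ • y := by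
      ext i
      simp [div_eq_inv_mul, ← mul_sub, posPart_sub_negPart]
    rw [hsub, mulVec_smul, smul_dotProduct, dotProduct_smul, smul_eq_mul, smul_eq_mul] at h
    calc sInf (dnnValues C) * s ^ 2 ≤ s⁻¹ * (s⁻¹ * (y ⬝ᵥ C *ᵥ y)) * s ^ 2 := by gcongr
      _ = y ⬝ᵥ C *ᵥ y := by field_simp

/-- Comparison of the `ℓ¹`- and `ℓᵖ`-norms on the `ℓᵖ`-ball. -/
lemma sq_sum_abs_le_rpow {n : ℕ} {p : ℝ} (hp : 1 ≤ p) {y : Fin n → ℝ}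
    (hy : (∑ i, |y i| ^ p) ^ (1 / p) ≤ 1) :
    (∑ i, |y i|) ^ 2 ≤ (n : ℝ) ^ (2 * (p - 1) / p) := by
  have hp0 : 0 < p := by linarith
  have hs : 0 ≤ ∑ i, |y i| := Finset.sum_nonneg fun i _ => abs_nonneg _
  have hsp : 0 ≤ ∑ i, |y i| ^ p := Finset.sum_nonneg fun i _ => by positivity
  have hy1 : ∑ i, |y i| ^ p ≤ 1 := by
    by_contra! hlt
    exact hy.not_gt (Real.one_lt_rpow hlt (by positivity))
  have h : (∑ i, |y i|) ^ p ≤ (n : ℝ) ^ (p - 1) := by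
    have := Real.rpow_sum_le_const_mul_sum_rpow Finset.univ y hp
    simp only [Finset.card_univ, Fintype.card_fin] at this
    exact this.trans (mul_le_of_le_one_right (by positivity) hy1)
  calc (∑ i, |y i|) ^ 2 = ((∑ i, |y i|) ^ p) ^ (2 / p) := by
        rw [← Real.rpow_mul hs, mul_div_cancel₀ _ hp0.ne', Real.rpow_two]
    _ ≤ ((n : ℝ) ^ (p - 1)) ^ (2 / p) := by gcongr
    _ = (n : ℝ) ^ (2 * (p - 1) / p) := by
        rw [← Real.rpow_mul (Nat.cast_nonneg n)]
        congr 1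
        ring

/-- Theorem 4: for `1 ≤ p ≤ 2`, `n^{2(p-1)/p} · α_{Q_C}^cop` is a valid lower bound for
the minimum of the quadratic form over the ℓᵖ-ball. -/
theorem stmt_16 (n : ℕ) (C : Matrix (Fin n) (Fin n) ℝ) (hC : Cᵀ = C)
    (p : ℝ) (hp1 : 1 ≤ p) (hp2 : p ≤ 2) :
    ∀ y : Fin n → ℝ, (∑ i, |y i| ^ p) ^ (1 / p) ≤ 1 →
      (n : ℝ) ^ (2 * (p - 1) / p) *
        sInf {r : ℝ | ∃ X : Matrix (Fin n ⊕ Fin n) (Fin n ⊕ Fin n) ℝ, Xᵀ = X ∧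
            (∀ x : Fin n ⊕ Fin n → ℝ, 0 ≤ x ⬝ᵥ X *ᵥ x) ∧
            (∀ i j, 0 ≤ X i j) ∧ (∑ i, ∑ j, X i j) = 1 ∧
            r = ∑ i, ∑ j, fromBlocks C (-C) (-C) C i j * X i j}
        ≤ y ⬝ᵥ C *ᵥ y := by
  intro y hy
  rcases Nat.eq_zero_or_pos n with rfl | hn
  · simp
  · change (n : ℝ) ^ (2 * (p - 1) / p) * sInf (dnnValues C) ≤ y ⬝ᵥ C *ᵥ y
    rw [mul_comm]
    exact (mul_le_mul_of_nonpos_left (sq_sum_abs_le_rpow hp1 hy)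
      (sInf_dnnValues_nonpos C hn)).trans (sInf_dnnValues_mul_sq_le C y)
end
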